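/- arXiv:math-ph/0410029 — 4 statements merged into one kernel-verified Lean document; each statement's English description precedes it below -/
import Mathlib

section
/- For all integers N and M, every n ≥ 1, and every smooth function F : U_n → ℝ, one has 𝓛_N(𝓛_M F) − 𝓛_M(𝓛_N F) = (N−M)·𝓛_{N+M} F on U_n; that is, the operators 𝓛_N satisfy the commutation relations of the Witt algebra. -/
noncomputable section

/-- The open set `U_n = {x ∈ ℝⁿ : x_j ≠ 0 for all j}`. -/
def Uset (n : ℕ) : Set (Fin n → ℝ) := {x | ∀ j, x j ≠ 0}

/-- The differential operator `𝓛_N` acting on functions of `n` real variables: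
`(𝓛_N F)(x) = ∑_{j=1}^n ( -x_j^{1+N} ∂F/∂x_j(x) - 2(N+1) x_j^N F(x) )`. -/
def Lop (N : ℤ) (n : ℕ) (F : (Fin n → ℝ) → ℝ) (x : Fin n → ℝ) : ℝ :=
  ∑ j : Fin n,
    (-(x j) ^ ((1 : ℤ) + N) * fderiv ℝ F x (Pi.single j 1)
      - 2 * ((N : ℝ) + 1) * (x j) ^ N * F x)

theorem Uset_isOpen (n : ℕ) : IsOpen (Uset n) := by
  have : Uset n = ⋂ j, {x : Fin n → ℝ | x j ≠ 0} := by
    ext x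
    simp [Uset]
  rw [this]
  exact isOpen_iInter_of_finite fun j => isOpen_ne_fun (continuous_apply j) continuous_const

theorem Lop_split (N : ℤ) (n : ℕ) (F : (Fin n → ℝ) → ℝ) (x : Fin n → ℝ) :
    Lop N n F x = -(∑ j, (x j) ^ (1 + N) * fderiv ℝ F x (Pi.single j 1))
      - 2 * ((N : ℝ) + 1) * (∑ j, (x j) ^ N) * F x := by
  unfold Lop
  rw [Finset.sum_sub_distrib, Finset.mul_sum, Finset.sum_mul, ← Finset.sum_neg_distrib]
  simp

theorem hasFDerivAt_coord_zpow {n : ℕ} {x : Fin n → ℝ} (hx : x ∈ Uset n) (j : Fin n) (m : ℤ) :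
    HasFDerivAt (fun y : Fin n → ℝ => (y j) ^ m)
      (((m : ℝ) * (x j) ^ (m - 1)) • ContinuousLinearMap.proj (R := ℝ) (φ := fun _ : Fin n => ℝ) j)
      x := by
  have h : HasFDerivAt (fun y : Fin n → ℝ => y j)
      (ContinuousLinearMap.proj (R := ℝ) (φ := fun _ : Fin n => ℝ) j) x := hasFDerivAt_apply j x
  exact HasDerivAt.comp_hasFDerivAt (h₂ := fun t : ℝ => t ^ m) x
    (hasDerivAt_zpow m (x j) (Or.inl (hx j))) h

theorem fderiv_Lop (M : ℤ) (n : ℕ) (F : (Fin n → ℝ) → ℝ) (x : Fin n → ℝ) (hx : x ∈ Uset n)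
    (hF : ContDiffAt ℝ 2 F x) (k : Fin n) :
    fderiv ℝ (Lop M n F) x (Pi.single k 1) =
      -(∑ j, (x j) ^ (1 + M) * fderiv ℝ (fderiv ℝ F) x (Pi.single k 1) (Pi.single j 1))
      - (1 + (M : ℝ)) * (x k) ^ M * fderiv ℝ F x (Pi.single k 1)
      - 2 * ((M : ℝ) + 1) * (∑ j, (x j) ^ M) * fderiv ℝ F x (Pi.single k 1)
      - 2 * ((M : ℝ) + 1) * (M : ℝ) * (x k) ^ (M - 1) * F x := by
  have h1 : HasFDerivAt F (fderiv ℝ F x) x :=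
    (hF.differentiableAt (by norm_num)).hasFDerivAt
  have h2 : HasFDerivAt (fderiv ℝ F) (fderiv ℝ (fderiv ℝ F) x) x :=
    ((hF.fderiv_right (m := 1) (by norm_num)).differentiableAt (by norm_num)).hasFDerivAt
  have h3 : ∀ j : Fin n, HasFDerivAt (fun y => fderiv ℝ F y (Pi.single j 1))
      ((fderiv ℝ (fderiv ℝ F) x).flip (Pi.single j 1)) x := by
    intro j
    have := h2.clm_apply (hasFDerivAt_const (Pi.single j 1 : Fin n → ℝ) x)
    simpa using this
  have h4 := ((HasFDerivAt.fun_sum (u := Finset.univ) fun j _ =>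
    (hasFDerivAt_coord_zpow hx j (1 + M)).mul (h3 j)).neg).sub
    (((HasFDerivAt.fun_sum (u := Finset.univ) fun j _ =>
      hasFDerivAt_coord_zpow hx j M).const_mul (2 * ((M : ℝ) + 1))).mul h1)
  have h5 : HasFDerivAt (Lop M n F) _ x :=
    h4.congr_of_eventuallyEq (Filter.Eventually.of_forall fun y => Lop_split M n F y)
  rw [h5.fderiv]
  simp [Finset.sum_add_distrib, Pi.single_apply]
  ring

theorem Lop_Lop (N M : ℤ) (n : ℕ) (F : (Fin n → ℝ) → ℝ) (x : Fin n → ℝ) (hx : x ∈ Uset n)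
    (hF : ContDiffAt ℝ 2 F x) :
    Lop N n (Lop M n F) x =
      (∑ k, ∑ j, (x k) ^ (1 + N) * (x j) ^ (1 + M) *
        fderiv ℝ (fderiv ℝ F) x (Pi.single k 1) (Pi.single j 1))
      + (1 + (M : ℝ)) * (∑ k, (x k) ^ (1 + (N + M)) * fderiv ℝ F x (Pi.single k 1))
      + 2 * ((M : ℝ) + 1) * (∑ j, (x j) ^ M) *
        (∑ k, (x k) ^ (1 + N) * fderiv ℝ F x (Pi.single k 1))
      + 2 * ((M : ℝ) + 1) * (M : ℝ) * (∑ k, (x k) ^ (N + M)) * F x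
      - 2 * ((N : ℝ) + 1) * (∑ j, (x j) ^ N) * Lop M n F x := by
  rw [Lop_split N]
  congr 1
  rw [Finset.mul_sum (a := 2 * ((M : ℝ) + 1) * (∑ j, (x j) ^ M)),
    Finset.mul_sum (a := 1 + (M : ℝ)),
    Finset.mul_sum (a := 2 * ((M : ℝ) + 1) * (M : ℝ)), Finset.sum_mul (a := F x)]
  rw [← Finset.sum_neg_distrib, ← Finset.sum_add_distrib, ← Finset.sum_add_distrib,
    ← Finset.sum_add_distrib]
  refine Finset.sum_congr rfl fun k _ => ?_
  rw [fderiv_Lop M n F x hx hF k]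
  have hk := hx k
  have e1 : (x k) ^ (1 + (N + M)) = (x k) ^ (1 + N) * (x k) ^ M := by
    rw [← zpow_add₀ hk]; congr 1; ring
  have e2 : (x k) ^ (N + M) = (x k) ^ (1 + N) * (x k) ^ (M - 1) := by
    rw [← zpow_add₀ hk]; congr 1; ring
  simp only [e1, e2, mul_assoc ((x k) ^ (1 + N))]
  rw [← Finset.mul_sum (a := (x k) ^ (1 + N))]
  ring

/-- For all integers `N`, `M`, every `n ≥ 1` and every smooth function
`F : U_n → ℝ`, one has `𝓛_N (𝓛_M F) - 𝓛_M (𝓛_N F) = (N - M) · 𝓛_{N+M} F` on `U_n`: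
the operators `𝓛_N` satisfy the commutation relations of the Witt algebra. -/
theorem Lop_witt_commutator (N M : ℤ) (n : ℕ) (hn : 1 ≤ n) (F : (Fin n → ℝ) → ℝ)
    (hF : ContDiffOn ℝ (⊤ : ℕ∞) F (Uset n)) :
    ∀ x ∈ Uset n,
      Lop N n (Lop M n F) x - Lop M n (Lop N n F) x
        = ((N : ℝ) - (M : ℝ)) * Lop (N + M) n F x := by
  intro x hx
  have hc : ContDiffAt ℝ 2 F x :=
    (hF.contDiffAt ((Uset_isOpen n).mem_nhds hx)).of_le (WithTop.coe_le_coe.2 (le_top : (2 : ℕ∞) ≤ ⊤))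
  have hs : IsSymmSndFDerivAt ℝ F x := hc.isSymmSndFDerivAt (by simp)
  have hS : (∑ k, ∑ j, (x k) ^ (1 + M) * (x j) ^ (1 + N) *
        fderiv ℝ (fderiv ℝ F) x (Pi.single k 1) (Pi.single j 1)) =
      ∑ k, ∑ j, (x k) ^ (1 + N) * (x j) ^ (1 + M) *
        fderiv ℝ (fderiv ℝ F) x (Pi.single k 1) (Pi.single j 1) := by
    rw [Finset.sum_comm]
    refine Finset.sum_congr rfl fun k _ => Finset.sum_congr rfl fun j _ => ?_
    rw [hs.eq (Pi.single j 1) (Pi.single k 1)]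
    ring
  rw [Lop_Lop N M n F x hx hc, Lop_Lop M N n F x hx hc, hS, Lop_split N, Lop_split M,
    Lop_split (N + M), add_comm M N]
  push_cast
  ring
end
end

section
/- Let α ∈ ℝ, n ≥ 0, and let x_1,…,x_n be pairwise distinct nonzero real numbers. Then for every real x with 0 < |x| < min_j |x_j|, the series Σ_{N=1}^∞ x^{N−2}·(𝓛_{−N} B_n^{(α)})(x_1,…,x_n) converges absolutely, and B_{n+1}^{(α)}(x, x_1,…,x_n) = (α/x²)·B_n^{(α)}(x_1,…,x_n) + Σ_{N=1}^∞ x^{N−2}·(𝓛_{−N} B_n^{(α)})(x_1,…,x_n) (the boundary Ward identity in operator form). -/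
noncomputable section

/-- The functions `B_n^{(α)}` defined by the Ward-identity recursion
`B_0^{(α)} = 1` and
`B_{n+1}^{(α)}(x, x_1, …, x_n) = (α/x²)·B_n^{(α)}(x_1,…,x_n)
  - ∑_{j=1}^n [ (1/(x_j - x) + 1/x)·∂B_n^{(α)}/∂x_j - (2/(x_j - x)²)·B_n^{(α)} ]`,
the new variable `x` being inserted as the first argument. -/
def Bfn (α : ℝ) : (n : ℕ) → (Fin n → ℝ) → ℝ
  | 0, _ => 1
  | n + 1, y =>
      α / (y 0) ^ 2 * Bfn α n (y ∘ Fin.succ)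
        - ∑ j : Fin n,
            ((1 / (y j.succ - y 0) + 1 / y 0)
                  * fderiv ℝ (Bfn α n) (y ∘ Fin.succ) (Pi.single j 1)
              - 2 / (y j.succ - y 0) ^ 2 * Bfn α n (y ∘ Fin.succ))

/-- For pairwise distinct nonzero `x_1, …, x_n` and every real `x` with
`0 < |x| < min_j |x_j|`, the series `∑_{N=1}^∞ x^{N-2} (𝓛_{-N} B_n^{(α)})(x_1,…,x_n)`
converges absolutely, and
`B_{n+1}^{(α)}(x, x_1, …, x_n) = (α/x²)·B_n^{(α)}(x_1,…,x_n)
  + ∑_{N=1}^∞ x^{N-2} (𝓛_{-N} B_n^{(α)})(x_1,…,x_n)`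
(the boundary Ward identity in operator form).  Here the series is indexed by `N = k + 1`
for `k : ℕ`. -/
theorem ward_identity_operator_form (α : ℝ) (n : ℕ) (xs : Fin n → ℝ)
    (h0 : ∀ j, xs j ≠ 0) (hdist : Function.Injective xs)
    (x : ℝ) (hx : 0 < |x|) (hlt : ∀ j, |x| < |xs j|) :
    Summable (fun k : ℕ =>
      |x ^ ((k : ℤ) + 1 - 2) * Lop (-((k : ℤ) + 1)) n (Bfn α n) xs|)
    ∧ Bfn α (n + 1) (Fin.cons x xs)
        = α / x ^ 2 * Bfn α n xs
          + ∑' k : ℕ, x ^ ((k : ℤ) + 1 - 2) * Lop (-((k : ℤ) + 1)) n (Bfn α n) xs := by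
  have hx0 : x ≠ 0 := abs_pos.mp hx
  have key : HasSum (fun k : ℕ => x ^ ((k : ℤ) + 1 - 2) * Lop (-((k : ℤ) + 1)) n (Bfn α n) xs)
      (∑ j : Fin n, (-(1 / (xs j - x) + 1 / x) * fderiv ℝ (Bfn α n) xs (Pi.single j 1)
        + 2 / (xs j - x) ^ 2 * Bfn α n xs)) := by
    unfold Lop
    simp_rw [Finset.mul_sum]
    apply hasSum_sum
    intro j _
    have ha := h0 j
    have hl := hlt j
    generalize xs j = a at ha hl ⊢
    generalize fderiv ℝ (Bfn α n) xs (Pi.single j 1) = D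
    generalize Bfn α n xs = F
    have hax : a - x ≠ 0 := by
      intro h
      rw [sub_eq_zero.mp h] at hl
      exact lt_irrefl _ hl
    have hr : ‖x / a‖ < 1 := by
      rw [norm_div, Real.norm_eq_abs, Real.norm_eq_abs, div_lt_one (abs_pos.mpr ha)]
      exact hl
    have h1 := (hasSum_geometric_of_norm_lt_one hr).mul_left (-(D / x))
    have h2 := (hasSum_coe_mul_geometric_of_norm_lt_one hr).mul_left (2 * F / (x * a))
    have h3 := h1.add h2
    have hxa : 1 - x / a ≠ 0 := by
      have : 1 - x / a = (a - x) / a := by field_simp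
      rw [this]
      exact div_ne_zero hax ha
    convert h3 using 1
    · rfl
    · funext k
      have e1 : x ^ ((k : ℤ) + 1 - 2) = x ^ k / x := by
        rw [show (k : ℤ) + 1 - 2 = k - 1 by ring, zpow_sub_one₀ hx0, zpow_natCast, div_eq_mul_inv]
      have e2 : a ^ ((1 : ℤ) + -((k : ℤ) + 1)) = (a ^ k)⁻¹ := by
        rw [show (1 : ℤ) + -((k : ℤ) + 1) = -k by ring, zpow_neg, zpow_natCast]
      have e3 : a ^ (-((k : ℤ) + 1)) = (a ^ k)⁻¹ * a⁻¹ := by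
        rw [zpow_neg, zpow_add_one₀ ha, zpow_natCast, mul_inv]
      rw [e1, e2, e3, div_pow]
      push_cast
      field_simp
      ring
    · have : 1 - x / a = (a - x) / a := by field_simp
      rw [this]
      field_simp
      ring
  refine ⟨key.summable.abs, ?_⟩
  rw [key.tsum_eq]
  have hc : (Fin.cons x xs : Fin (n + 1) → ℝ) ∘ Fin.succ = xs := by
    funext j
    simp
  simp only [Bfn, hc, Fin.cons_zero, Fin.cons_succ]
  rw [sub_eq_add_neg, ← Finset.sum_neg_distrib]
  congr 1
  apply Finset.sum_congr rfl
  intro j _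
  ring
end
end

section
/- For every p ≥ 1 and all pairwise distinct nonzero real numbers x_1,…,x_p, one has lim_{x→0} x²·T_{p+1}(x, x_1,…,x_p) = 2·T_p(x_1,…,x_p); equivalently, T_{p+1}(x, x_1,…,x_p) = 2 x^{−2}·T_p(x_1,…,x_p) + o(x^{−2}) as x → 0. -/
noncomputable section

/-- The rational functions `T_p`, as functions of real variables:
`T_p(x_1,…,x_p) = ∑_s 1/( x_{s(1)}² (x_{s(2)}-x_{s(1)})² ⋯ (x_{s(p)}-x_{s(p-1)})² x_{s(p)}² )`,
summed over all permutations `s` of `{1,…,p}`, with `T_0 = 0` (so `T_1(x) = 1/x⁴`). -/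
def Tfn : (p : ℕ) → (Fin p → ℝ) → ℝ
  | 0, _ => 0
  | m + 1, x =>
      ∑ s : Equiv.Perm (Fin (m + 1)),
        1 / ((x (s 0)) ^ 2 * (∏ i : Fin m, (x (s i.succ) - x (s i.castSucc)) ^ 2)
              * (x (s (Fin.last m))) ^ 2)

def Dn (m : ℕ) (x : Fin (m + 1) → ℝ) (s : Equiv.Perm (Fin (m + 1))) : ℝ :=
  (x (s 0)) ^ 2 * (∏ i : Fin m, (x (s i.succ) - x (s i.castSucc)) ^ 2)
              * (x (s (Fin.last m))) ^ 2

lemma Dn_rev (m : ℕ) (x : Fin (m + 1) → ℝ) (s : Equiv.Perm (Fin (m + 1))) :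
    Dn m x (s * Fin.revPerm) = Dn m x s := by
  unfold Dn
  have h : ∏ i : Fin m, (x ((s * Fin.revPerm : Equiv.Perm (Fin (m + 1))) i.succ) -
        x ((s * Fin.revPerm : Equiv.Perm (Fin (m + 1))) i.castSucc)) ^ 2
      = ∏ i : Fin m, (x (s i.succ) - x (s i.castSucc)) ^ 2 := by
    rw [← Equiv.prod_comp (Fin.revPerm (n := m))]
    refine Finset.prod_congr rfl fun i _ => ?_
    simp only [Equiv.Perm.mul_apply, Fin.revPerm_apply, ← Fin.rev_castSucc, ← Fin.rev_succ,
      Fin.rev_rev]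
    ring
  rw [h]
  simp only [Equiv.Perm.mul_apply, Fin.revPerm_apply, Fin.rev_zero, Fin.rev_last]
  ring

lemma cons_cont (p : ℕ) (xs : Fin p → ℝ) (j : Fin (p + 1)) :
    Continuous (fun x : ℝ => (Fin.cons x xs : Fin (p + 1) → ℝ) j) := by
  refine Fin.cases ?_ (fun i => ?_) j
  · exact continuous_id
  · simpa using continuous_const

lemma term_first (m : ℕ) (xs : Fin (m + 1) → ℝ)
    (h0 : ∀ j, xs j ≠ 0) (hdist : Function.Injective xs) (e : Equiv.Perm (Fin (m + 1))) :
    Filter.Tendsto (fun x : ℝ => x ^ 2 *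
        (1 / Dn (m + 1) (Fin.cons x xs) (Equiv.Perm.decomposeFin.symm (0, e))))
      (nhdsWithin 0 {x | x ≠ 0}) (nhds (1 / Dn m xs e)) := by
  have hD : Dn m xs e ≠ 0 := by
    unfold Dn
    refine mul_ne_zero (mul_ne_zero (pow_ne_zero _ (h0 _)) ?_) (pow_ne_zero _ (h0 _))
    refine Finset.prod_ne_zero_iff.2 fun i _ => pow_ne_zero _ (sub_ne_zero.2 fun h => ?_)
    exact (Fin.castSucc_lt_succ (i := i)).ne' (e.injective (hdist h))
  have hc : Filter.Tendsto (fun x : ℝ => 1 / ((xs (e 0) - x) ^ 2 *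
      (∏ i : Fin m, (xs (e i.succ) - xs (e i.castSucc)) ^ 2) * (xs (e (Fin.last m))) ^ 2))
      (nhds 0) (nhds (1 / Dn m xs e)) := by
    refine Filter.Tendsto.div tendsto_const_nhds ?_ hD
    have : Continuous (fun x : ℝ => ((xs (e 0) - x) ^ 2 *
      (∏ i : Fin m, (xs (e i.succ) - xs (e i.castSucc)) ^ 2) * (xs (e (Fin.last m))) ^ 2)) := by
      fun_prop
    have h := this.tendsto 0
    simpa [Dn] using h
  refine (hc.mono_left nhdsWithin_le_nhds).congr' ?_
  filter_upwards [self_mem_nhdsWithin] with x hx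
  have hx' : x ≠ 0 := hx
  unfold Dn
  rw [Fin.prod_univ_succ]
  simp only [← Fin.succ_last, Fin.castSucc_zero, Fin.castSucc_succ,
    Equiv.Perm.decomposeFin_symm_apply_zero, Equiv.Perm.decomposeFin_symm_apply_succ,
    Equiv.swap_self, Equiv.refl_apply, Fin.cons_zero, Fin.cons_succ]
  rw [mul_one_div, mul_assoc (x ^ 2), ← div_div (x ^ 2),
    div_self (pow_ne_zero 2 hx')]

lemma term_mid (m : ℕ) (xs : Fin (m + 1) → ℝ)
    (h0 : ∀ j, xs j ≠ 0) (hdist : Function.Injective xs) (s : Equiv.Perm (Fin (m + 2)))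
    (h1 : s 0 ≠ 0) (h2 : s (Fin.last _) ≠ 0) :
    Filter.Tendsto (fun x : ℝ => x ^ 2 * (1 / Dn (m + 1) (Fin.cons x xs) s))
      (nhdsWithin 0 {x | x ≠ 0}) (nhds 0) := by
  have hinj : Function.Injective (Fin.cons 0 xs : Fin (m + 2) → ℝ) := by
    rw [Fin.cons_injective_iff]
    exact ⟨fun ⟨j, hj⟩ => h0 j hj, hdist⟩
  have hne : ∀ j : Fin (m + 2), j ≠ 0 → (Fin.cons 0 xs : Fin (m + 2) → ℝ) j ≠ 0 := by
    intro j hj h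
    exact hj (hinj (by simpa using h))
  have hD : Dn (m + 1) (Fin.cons 0 xs) s ≠ 0 := by
    unfold Dn
    refine mul_ne_zero (mul_ne_zero (pow_ne_zero _ (hne _ h1)) ?_) (pow_ne_zero _ (hne _ h2))
    refine Finset.prod_ne_zero_iff.2 fun i _ => pow_ne_zero _ (sub_ne_zero.2 fun h => ?_)
    exact (Fin.castSucc_lt_succ (i := i)).ne' (s.injective (hinj h))
  have hcont : Continuous (fun x : ℝ => Dn (m + 1) (Fin.cons x xs) s) := by
    unfold Dn
    have := cons_cont (m + 1) xs
    fun_prop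
  have hx : Filter.Tendsto (fun x : ℝ => x ^ 2) (nhds 0) (nhds 0) := by
    simpa using (continuous_pow (M := ℝ) 2).tendsto 0
  have h := hx.mul ((tendsto_const_nhds (x := (1 : ℝ))).div (hcont.tendsto 0) hD)
  rw [zero_mul] at h
  exact h.mono_left nhdsWithin_le_nhds

/-- For every `p ≥ 1` and all pairwise distinct nonzero real numbers
`x_1, …, x_p`, one has `lim_{x→0} x² · T_{p+1}(x, x_1, …, x_p) = 2 · T_p(x_1, …, x_p)`;
equivalently, `T_{p+1}(x, x_1, …, x_p) = 2 x^{-2} T_p(x_1,…,x_p) + o(x^{-2})` as `x → 0`. -/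
theorem T_leading_Laurent_coefficient (p : ℕ) (hp : 1 ≤ p) (xs : Fin p → ℝ)
    (h0 : ∀ j, xs j ≠ 0) (hdist : Function.Injective xs) :
    Filter.Tendsto (fun x : ℝ => x ^ 2 * Tfn (p + 1) (Fin.cons x xs))
      (nhdsWithin 0 {x | x ≠ 0}) (nhds (2 * Tfn p xs)) := by
  obtain ⟨m, rfl⟩ : ∃ m, p = m + 1 := ⟨p - 1, by omega⟩
  let G : Equiv.Perm (Fin (m + 2)) → ℝ := fun s =>
    if s 0 = 0 then 1 / Dn m xs (Equiv.Perm.decomposeFin s).2 else 0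
  have hG : ∑ s, G s = Tfn (m + 1) xs := by
    rw [← Equiv.sum_comp Equiv.Perm.decomposeFin.symm, Fintype.sum_prod_type, Finset.sum_comm]
    simp only [G, Equiv.Perm.decomposeFin_symm_apply_zero, Equiv.apply_symm_apply,
      Finset.sum_ite_eq', Finset.sum_ite_eq, Finset.mem_univ, if_true]
    rfl
  have hG2 : ∑ s, (G s + G (s * Fin.revPerm)) = 2 * Tfn (m + 1) xs := by
    have hr : ∑ s, G (s * Fin.revPerm) = ∑ s, G s :=
      Equiv.sum_comp (Equiv.mulRight Fin.revPerm) G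
    rw [Finset.sum_add_distrib, hr, hG]
    ring
  have hfirst : ∀ s : Equiv.Perm (Fin (m + 2)), s 0 = 0 →
      Filter.Tendsto (fun x : ℝ => x ^ 2 * (1 / Dn (m + 1) (Fin.cons x xs) s))
      (nhdsWithin 0 {x | x ≠ 0}) (nhds (G s)) := by
    intro s hs
    obtain ⟨⟨k, e⟩, rfl⟩ := Equiv.Perm.decomposeFin.symm.surjective s
    rw [Equiv.Perm.decomposeFin_symm_apply_zero] at hs
    subst hs
    simpa [G] using term_first m xs h0 hdist e
  have hrev0 : ∀ s : Equiv.Perm (Fin (m + 2)), (s * Fin.revPerm : Equiv.Perm (Fin (m + 2))) 0 = s (Fin.last _) := by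
    intro s
    simp [Equiv.Perm.mul_apply]
  rw [← hG2]
  have hT : (fun x : ℝ => x ^ 2 * Tfn (m + 1 + 1) (Fin.cons x xs)) =
      fun x : ℝ => ∑ s : Equiv.Perm (Fin (m + 2)),
        x ^ 2 * (1 / Dn (m + 1) (Fin.cons x xs) s) := by
    funext x
    rw [← Finset.mul_sum]
    rfl
  rw [hT]
  refine tendsto_finsetSum _ fun s _ => ?_
  by_cases h1 : s 0 = 0
  · have h2 : s (Fin.last _) ≠ 0 := fun h => by
      have := s.injective (h.trans h1.symm)
      exact absurd this (Fin.last_pos).ne'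
    have : G (s * Fin.revPerm) = 0 := by
      simp only [G, hrev0, if_neg h2]
    rw [this, add_zero]
    exact hfirst s h1
  · have hs : G s = 0 := if_neg h1
    rw [hs, zero_add]
    by_cases h2 : s (Fin.last _) = 0
    · have := hfirst (s * Fin.revPerm) ((hrev0 s).trans h2)
      simpa only [Dn_rev] using this
    · have : G (s * Fin.revPerm) = 0 := by
        simp only [G, hrev0, if_neg h2]
      rw [this]
      exact term_mid m xs h0 hdist s h1 h2
end
end

section
/- Let v ∈ V be a highest-weight vector of weight h with v ≠ 0 and L_{−1} v ≠ 0, let κ ∈ ℂ with κ ≠ 0, and set χ := ( (κ/2)·L_{−1}∘L_{−1} − 2·L_{−2} ) v. Then L_n χ = 0 for all integers n ≥ 1 if and only if h = (6−κ)/(2κ) and c = (3κ−8)(6−κ)/(2κ). -/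
noncomputable section

/-- Let `v ≠ 0` be a highest-weight vector of weight `h` with
`L₋₁ v ≠ 0`, let `κ ≠ 0`, and set `χ := ((κ/2) L₋₁ ∘ L₋₁ - 2 L₋₂) v`.  Then `L n χ = 0`
for all `n ≥ 1` if and only if `h = (6 - κ)/(2κ)` and `c = (3κ - 8)(6 - κ)/(2κ)`. -/
theorem virasoro_level_two_degeneracy_iff {V : Type*} [AddCommGroup V] [Module ℂ V]
    (c : ℂ) (L : ℤ → Module.End ℂ V)
    (hVir : ∀ m k : ℤ, ∀ u : V,
      L m (L k u) - L k (L m u)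
        = ((m - k : ℤ) : ℂ) • L (m + k) u
          + (if m = -k then ((m ^ 3 - m : ℤ) : ℂ) / 12 * c else 0) • u)
    (h κ : ℂ) (v : V)
    (hv1 : ∀ n : ℤ, 1 ≤ n → L n v = 0) (hv0 : L 0 v = h • v)
    (hv : v ≠ 0) (hv' : L (-1) v ≠ 0) (hκ : κ ≠ 0) :
    (∀ n : ℤ, 1 ≤ n →
        L n ((κ / 2) • L (-1) (L (-1) v) - (2 : ℂ) • L (-2) v) = 0)
      ↔ (h = (6 - κ) / (2 * κ) ∧ c = (3 * κ - 8) * (6 - κ) / (2 * κ)) := by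
  have comm : ∀ m k : ℤ, ∀ u : V, L m (L k u) = L k (L m u) + (((m - k : ℤ) : ℂ) • L (m + k) u
          + (if m = -k then ((m ^ 3 - m : ℤ) : ℂ) / 12 * c else 0) • u) := by
    intro m k u
    rw [← hVir m k u]; abel
  have a0 : L 0 (L (-1) v) = (h + 1) • L (-1) v := by
    rw [comm 0 (-1) v, hv0]
    norm_num
    module
  have a1 : L 1 (L (-1) v) = (2 * h) • v := by
    rw [comm 1 (-1) v, hv1 1 le_rfl]
    norm_num [hv0]
    module
  have a2 : L 2 (L (-1) v) = 0 := by
    rw [comm 2 (-1) v, hv1 2 (by norm_num)]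
    norm_num [hv1 1 le_rfl]
  have b1 : L 1 (L (-1) (L (-1) v)) = (4 * h + 2) • L (-1) v := by
    rw [comm 1 (-1) (L (-1) v), a1]
    norm_num [a0]
    module
  have b2 : L 2 (L (-1) (L (-1) v)) = (6 * h) • v := by
    rw [comm 2 (-1) (L (-1) v), a2]
    norm_num [a1]
    module
  have d1 : L 1 (L (-2) v) = (3 : ℂ) • L (-1) v := by
    rw [comm 1 (-2) v, hv1 1 le_rfl]
    norm_num
  have d2 : L 2 (L (-2) v) = (4 * h + c / 2) • v := by
    rw [comm 2 (-2) v, hv1 2 (by norm_num)]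
    norm_num [hv0]
    module
  have e1 : L 1 ((κ / 2) • L (-1) (L (-1) v) - (2 : ℂ) • L (-2) v)
      = (κ * (2 * h + 1) - 6) • L (-1) v := by
    rw [map_sub, map_smul, map_smul, b1, d1]
    module
  have e2 : L 2 ((κ / 2) • L (-1) (L (-1) v) - (2 : ℂ) • L (-2) v)
      = ((3 * κ - 8) * h - c) • v := by
    rw [map_sub, map_smul, map_smul, b2, d2]
    module
  have e3 : ∀ n : ℤ, 3 ≤ n →
      L n ((κ / 2) • L (-1) (L (-1) v) - (2 : ℂ) • L (-2) v) = 0 := by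
    intro n hn
    have f : ∀ m : ℤ, 2 ≤ m → L m (L (-1) v) = 0 := by
      intro m hm
      rw [comm m (-1) v, hv1 m (by omega), hv1 (m + -1) (by omega), if_neg (by omega)]
      simp
    have g : L n (L (-1) (L (-1) v)) = 0 := by
      rw [comm n (-1) _, f n (by omega), f (n + -1) (by omega), if_neg (by omega)]
      simp
    have g' : L n (L (-2) v) = 0 := by
      rw [comm n (-2) _, hv1 n (by omega), hv1 (n + -2) (by omega), if_neg (by omega)]
      simp
    rw [map_sub, map_smul, map_smul, g, g']
    simp
  have hiff : h = (6 - κ) / (2 * κ) ↔ κ * (2 * h + 1) - 6 = 0 := by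
    rw [eq_div_iff (by simpa using hκ)]
    constructor <;> intro H <;> linear_combination H
  constructor
  · intro H
    have H1 := H 1 le_rfl
    have H2 := H 2 (by norm_num)
    rw [e1, smul_eq_zero_iff_left hv'] at H1
    rw [e2, smul_eq_zero_iff_left hv] at H2
    have hh := hiff.2 H1
    refine ⟨hh, ?_⟩
    rw [mul_div_assoc, ← hh]
    linear_combination -H2
  · rintro ⟨hh, hc⟩ n hn
    rcases (by omega : n = 1 ∨ n = 2 ∨ 3 ≤ n) with rfl | rfl | h3
    · rw [e1, hiff.1 hh, zero_smul]
    · rw [mul_div_assoc, ← hh] at hc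
      rw [e2, hc, sub_self, zero_smul]
    · exact e3 n h3
end
end
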